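/- arXiv:2002.00260 — 4 statements merged into one kernel-verified Lean document; each statement's English description precedes it below -/
import Mathlib

section
/- Under Assumptions 1, 2 and 3, suppose in addition ‖x(t)‖_v ≤ x̄ almost surely for all t, and α_t = h/(t+t0) with h > 2/σ and t0 ≥ max(4h, τ). Then almost surely, for every t ≥ τ, ‖Σ_{k=τ}^{t} α_k B̃_{k,t} φ(k)‖_v ≤ (16 ε̄ h τ/σ) · 1/(t+1+t0), where ε̄ = 2x̄ + C + w̄/v̲. -/
/-!
Pathwise, off a null set, the bound is deterministic. One update moves the iterate by at most
`α_t ε̄` in the weighted norm (`step_increment`), so over the delay window the iterate moves by at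
most `2 τ ε̄ α_k`, because `t₀ ≥ τ` gives `α_j ≤ 2 α_k` for `k - τ ≤ j`. As `F` is nonexpansive and
`|1{i_k = i} - d_{k,i}| ≤ 1`, this yields `‖φ(k)‖_v ≤ 4 τ ε̄ α_k`.

Coordinatewise the weighted sum satisfies `S_{t+1} = (1 - α_{t+1} d_{t+1}) S_t + α_{t+1} φ(t+1)` with
`σ ≤ d ≤ 1`. Since `h σ > 2`, the sequence `4 τ ε̄ (4h/σ) / (t+1+t₀)` dominates this recursion
(`recursion_step`), and induction on `t` (`weighted_sum_bound`) finishes the proof.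
-/

open MeasureTheory Finset

/-- Weighted infinity norm `‖x‖_v = max_i |x_i| / v_i`. -/
noncomputable def vnorm {n : ℕ} (v x : Fin n → ℝ) : ℝ := ⨆ i, |x i| / v i

lemma abs_le_vnorm_mul {n : ℕ} {v : Fin n → ℝ} (hv : ∀ i, 0 < v i) (x : Fin n → ℝ) (i : Fin n) :
    |x i| ≤ vnorm v x * v i := by
  rw [← div_le_iff₀ (hv i)]
  exact le_ciSup (f := fun i => |x i| / v i) (Set.finite_range _).bddAbove i

lemma vnorm_le {n : ℕ} (hn : 0 < n) {v : Fin n → ℝ} (hv : ∀ i, 0 < v i) {x : Fin n → ℝ} {c : ℝ}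
    (hx : ∀ i, |x i| ≤ c * v i) : vnorm v x ≤ c := by
  have : Nonempty (Fin n) := ⟨⟨0, hn⟩⟩
  exact ciSup_le fun i => (div_le_iff₀ (hv i)).2 (hx i)

lemma vnorm_nonneg {n : ℕ} {v : Fin n → ℝ} (hv : ∀ i, 0 < v i) (x : Fin n → ℝ) :
    0 ≤ vnorm v x :=
  Real.iSup_nonneg fun i => div_nonneg (abs_nonneg _) (hv i).le

/-- One step of the recursion, with `T = t + t₀`: the sequence `(4h/σ) / T` is a supersolution. -/
lemma recursion_step {sg h T K d s p : ℝ} (hsg : 0 < sg) (hh : 2 / sg < h) (hT : h ≤ T)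
    (hK : 0 ≤ K) (hd : sg ≤ d) (hd1 : d ≤ 1) (hs : |s| ≤ K * (4 * h / sg) / T)
    (hp : |p| ≤ K * (h / T)) :
    |(1 - h / T * d) * s + h / T * p| ≤ K * (4 * h / sg) / (T + 1) := by
  have hh0 : 0 < h := lt_trans (by positivity) hh
  have hT0 : 0 < T := lt_of_lt_of_le hh0 hT
  have ha : 0 < h / T := by positivity
  have ha1 : h / T ≤ 1 := (div_le_one hT0).2 hT
  have h1 : 0 ≤ 1 - h / T * d := by nlinarith
  have h2 : 1 - h / T * d ≤ 1 - h / T * sg := by nlinarith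
  have hhs : 2 < h * sg := (div_lt_iff₀ hsg).1 hh
  have key : (1 - h / T * sg) * ((4 * h / sg) / T) + h / T * (h / T)
      ≤ (4 * h / sg) / (T + 1) := by
    have e : (4 * h / sg) / (T + 1) - ((1 - h / T * sg) * ((4 * h / sg) / T) + h / T * (h / T))
        = h * (3 * (h * sg) * (T + 1) - 4 * T) / (sg * T ^ 2 * (T + 1)) := by
      field_simp
      ring
    have : 0 ≤ h * (3 * (h * sg) * (T + 1) - 4 * T) / (sg * T ^ 2 * (T + 1)) := by
      apply div_nonneg _ (by positivity)
      apply mul_nonneg hh0.le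
      nlinarith
    linarith
  calc |(1 - h / T * d) * s + h / T * p|
      ≤ |(1 - h / T * d) * s| + |h / T * p| := abs_add_le _ _
    _ = (1 - h / T * d) * |s| + h / T * |p| := by
        rw [abs_mul, abs_mul, abs_of_nonneg h1, abs_of_pos ha]
    _ ≤ (1 - h / T * sg) * (K * (4 * h / sg) / T) + h / T * (K * (h / T)) := by
        gcongr
        exact h1.trans h2
    _ = K * ((1 - h / T * sg) * ((4 * h / sg) / T) + h / T * (h / T)) := by ring
    _ ≤ K * ((4 * h / sg) / (T + 1)) := by gcongr
    _ = _ := by ring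

/-- The scalar form of the estimate: inputs of size `K α_k`, discounted by factors `1 - α_ℓ d_ℓ`
with `σ ≤ d_ℓ ≤ 1`, accumulate to at most `K (4h/σ) / (t + 1 + t₀)`. -/
lemma weighted_sum_bound {sg h t0 K : ℝ} {τ : ℕ} {α d p : ℕ → ℝ} (hsg : 0 < sg) (hh : 2 / sg < h)
    (ht0 : h ≤ t0) (hstep : ∀ t, α t = h / ((t : ℝ) + t0)) (hK : 0 ≤ K)
    (hd : ∀ t, τ ≤ t → sg ≤ d t) (hd1 : ∀ t, d t ≤ 1) (hp : ∀ t, τ ≤ t → |p t| ≤ K * α t)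
    (t : ℕ) (ht : τ ≤ t) :
    |∑ k ∈ Finset.Icc τ t, α k * ((∏ ℓ ∈ Finset.Icc (k + 1) t, (1 - α ℓ * d ℓ)) * p k)|
      ≤ K * (4 * h / sg) / ((t : ℝ) + 1 + t0) := by
  have hh0 : 0 < h := lt_trans (by positivity) hh
  have hT : ∀ t : ℕ, h ≤ (t : ℝ) + t0 := fun t => by
    have : (0 : ℝ) ≤ t := t.cast_nonneg
    linarith
  induction t, ht using Nat.le_induction with
  | base =>
    have hpτ := hp τ le_rfl
    rw [hstep] at hpτ
    have hT0 : 0 < (τ : ℝ) + t0 := lt_of_lt_of_le hh0 (hT τ)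
    have := recursion_step (s := 0) hsg hh (hT τ) hK (hd τ le_rfl) (hd1 τ)
      (by rw [abs_zero]; positivity) hpτ
    simpa [hstep, add_right_comm] using this
  | succ t ht ih =>
    have hpt := hp (t + 1) (by omega)
    rw [hstep] at hpt
    have := recursion_step hsg hh (hT (t + 1)) hK (hd (t + 1) (by omega)) (hd1 (t + 1))
      (by push_cast; exact ih) hpt
    rw [show ((t + 1 : ℕ) : ℝ) + 1 + t0 = ((t + 1 : ℕ) : ℝ) + t0 + 1 by ring]
    refine le_of_eq_of_le ?_ this
    congr 1
    rw [Finset.sum_Icc_succ_top (by omega), ← hstep, Finset.mul_sum]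
    congr 1
    · apply Finset.sum_congr rfl
      intro k hk
      rw [Finset.prod_Icc_succ_top (by have := (Finset.mem_Icc.1 hk).2; omega)]
      ring
    · simp

/-- The increment of one coordinate in one update is at most `α_t ε̄ v_i`. -/
lemma step_increment {n : ℕ} {v : Fin n → ℝ} (hv : ∀ i, 0 < v i)
    {F : (Fin n → ℝ) → (Fin n → ℝ)} {γ C a xbar wbar w : ℝ} (hγ1 : γ < 1)
    (ha : 0 ≤ a) (hFbd : ∀ x, vnorm v (F x) ≤ γ * vnorm v x + C) {x y : Fin n → ℝ}
    {j : Fin n} (hx : vnorm v x ≤ xbar) (hw : |w| ≤ wbar)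
    (hy : ∀ i, y i = if i = j then x i + a * (F x i - x i + w) else x i) (i : Fin n) :
    |y i - x i| ≤ a * ((2 * xbar + C + wbar / ⨅ i, v i) * v i) := by
  have : Nonempty (Fin n) := ⟨i⟩
  have hx0 := vnorm_nonneg hv x
  have hvi := hv i
  have hinf : 0 < ⨅ i, v i := by
    obtain ⟨k, hk⟩ := exists_eq_ciInf_of_finite (f := v)
    rw [← hk]; exact hv k
  have hinfle : ⨅ i, v i ≤ v i := ciInf_le (Set.finite_range v).bddBelow i
  have hw0 : 0 ≤ wbar := (abs_nonneg _).trans hw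
  have hwv : wbar ≤ wbar / (⨅ i, v i) * v i := by
    rw [div_mul_eq_mul_div, le_div_iff₀ hinf]
    exact mul_le_mul_of_nonneg_left hinfle hw0
  have hFi : |F x i| ≤ (xbar + C) * v i := by
    refine (abs_le_vnorm_mul hv (F x) i).trans ?_
    gcongr
    have := hFbd x
    nlinarith
  have hxi : |x i| ≤ xbar * v i := (abs_le_vnorm_mul hv x i).trans (by gcongr)
  have hmain : |F x i - x i + w| ≤ (2 * xbar + C + wbar / ⨅ i, v i) * v i := by
    rw [abs_le] at *
    constructor <;> nlinarith
  rw [hy]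
  split_ifs
  · rw [add_sub_cancel_left, abs_mul, abs_of_nonneg ha]
    gcongr
  · rw [sub_self, abs_zero]
    exact mul_nonneg ha ((abs_nonneg _).trans hmain)

/-- **Lemma 4.** Under Assumptions 1, 2 and 3, the almost-sure bound `‖x(t)‖_v ≤ x̄`, and
step sizes `α_t = h/(t+t₀)` with `h > 2/σ`, `t₀ ≥ max(4h, τ)`, almost surely, for every
`t ≥ τ`, `‖Σ_{k=τ}^t α_k B̃_{k,t} φ(k)‖_v ≤ (16ε̄hτ/σ)·1/(t+1+t₀)`,
where `ε̄ = 2x̄ + C + w̄/v̲`. -/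
theorem SA_phi_weighted_sum_bound
    {Ω : Type*} {m0 : MeasurableSpace Ω} (μ : Measure Ω) [IsProbabilityMeasure μ]
    (ℱ : Filtration ℕ m0)
    (n : ℕ) (hn : 0 < n) (v : Fin n → ℝ) (hv : ∀ i, 0 < v i)
    -- Assumption 1 (contraction)
    (F : (Fin n → ℝ) → (Fin n → ℝ)) (γ C : ℝ) (hγ0 : 0 < γ) (hγ1 : γ < 1) (hC : 0 < C)
    (hcontr : ∀ x y, vnorm v (F x - F y) ≤ γ * vnorm v (x - y))
    (hFbd : ∀ x, vnorm v (F x) ≤ γ * vnorm v x + C)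
    (xstar : Fin n → ℝ) (hfix : F xstar = xstar)
    -- the asynchronous SA scheme
    (idx : ℕ → Ω → Fin n) (hidx : ∀ t, Measurable[ℱ t] (idx t))
    (w : ℕ → Ω → ℝ) (wbar : ℝ)
    (α : ℕ → ℝ) (hα : ∀ t, α t ∈ Set.Ioc (0 : ℝ) 1)
    (X : ℕ → Ω → Fin n → ℝ) (hX0 : ∀ ω, X 0 ω = 0)
    (hupd : ∀ t ω i, X (t + 1) ω i =
      if i = idx t ω then X t ω i + α t * (F (X t ω) i - X t ω i + w t ω) else X t ω i)
    -- Assumption 2 (martingale difference noise)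
    (hw_meas : ∀ t, Measurable[ℱ (t + 1)] (w t))
    (hw_mean : ∀ t, μ[w t | ℱ t] =ᵐ[μ] 0)
    (hw_bd : ∀ t, ∀ᵐ ω ∂μ, |w t ω| ≤ wbar)
    -- Assumption 3 (sufficient exploration), with `d_{t,i} = P(i_t = i | ℱ_{t-τ})`
    (sg : ℝ) (τ : ℕ) (hsg0 : 0 < sg) (hsg1 : sg < 1) (hτ : 0 < τ)
    (d : ℕ → Fin n → Ω → ℝ)
    (hd : ∀ t i, d t i = μ[(fun ω => if idx t ω = i then (1 : ℝ) else 0) | ℱ (t - τ)])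
    (hexpl : ∀ (i : Fin n) (t : ℕ), τ ≤ t → ∀ᵐ ω ∂μ, sg ≤ d t i ω)
    -- step sizes
    (h t0 : ℝ) (hh : 2 / sg < h) (ht0 : max (4 * h) (τ : ℝ) ≤ t0)
    (hstep : ∀ t, α t = h / ((t : ℝ) + t0))
    -- almost sure boundedness of the iterates
    (xbar : ℝ) (hXbd : ∀ t, ∀ᵐ ω ∂μ, vnorm v (X t ω) ≤ xbar)
    -- the drift vector `φ(t)`
    (phi : ℕ → Ω → Fin n → ℝ)
    (hphi : ∀ t ω i, phi t ω i =
      ((if idx t ω = i then (1 : ℝ) else 0) - d t i ω) *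
        (F (X t ω) i - F (X (t - τ) ω) i - (X t ω i - X (t - τ) ω i))) :
    ∀ t, τ ≤ t → ∀ᵐ ω ∂μ,
      vnorm v (fun i => ∑ k ∈ Finset.Icc τ t,
          α k * ((∏ ℓ ∈ Finset.Icc (k + 1) t, (1 - α ℓ * d ℓ i ω)) * phi k ω i)) ≤
        (16 * (2 * xbar + C + wbar / ⨅ i, v i) * h * (τ : ℝ) / sg) *
          (1 / ((t : ℝ) + 1 + t0)) := by
  have hsgh : 0 < h := lt_trans (by positivity) hh
  have ht4 : 4 * h ≤ t0 := (le_max_left _ _).trans ht0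
  have htτ : (τ : ℝ) ≤ t0 := (le_max_right _ _).trans ht0
  have ht0pos : 0 < t0 := by linarith
  have hint : ∀ t i, Integrable (fun ω => if idx t ω = i then (1 : ℝ) else 0) μ := by
    intro t i
    have hm : Measurable (fun ω => if idx t ω = i then (1 : ℝ) else 0) :=
      (measurable_of_countable fun j : Fin n => if j = i then (1 : ℝ) else 0).comp
        ((hidx t).mono (ℱ.le t) le_rfl)
    refine Integrable.of_bound hm.aestronglyMeasurable 1 (Filter.Eventually.of_forall fun ω => ?_)
    split_ifs <;> simp
  have hd0 : ∀ t i, ∀ᵐ ω ∂μ, 0 ≤ d t i ω := by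
    intro t i
    rw [hd]
    apply condExp_nonneg
    refine Filter.Eventually.of_forall fun ω => ?_
    dsimp only [Pi.zero_apply]
    split_ifs <;> simp
  have hd1 : ∀ t i, ∀ᵐ ω ∂μ, d t i ω ≤ 1 := by
    intro t i
    rw [hd]
    have := condExp_mono (μ := μ) (m := ℱ (t - τ)) (hint t i) (integrable_const (1 : ℝ))
      (Filter.Eventually.of_forall fun ω => by dsimp only; split_ifs <;> simp)
    rwa [condExp_const (ℱ.le _)] at this
  have hd0' := ae_all_iff.2 fun t => ae_all_iff.2 (hd0 t)
  have hd1' := ae_all_iff.2 fun t => ae_all_iff.2 (hd1 t)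
  have hexpl' : ∀ᵐ ω ∂μ, ∀ i t, τ ≤ t → sg ≤ d t i ω :=
    ae_all_iff.2 fun i => ae_all_iff.2 fun t => by
      by_cases ht : τ ≤ t
      · filter_upwards [hexpl i t ht] with ω hω _ using hω
      · exact Filter.Eventually.of_forall fun ω h => absurd h ht
  intro t ht
  filter_upwards [hd0', hd1', hexpl', ae_all_iff.2 hw_bd, ae_all_iff.2 hXbd]
    with ω hd0 hd1 hex hwb hXb
  set E := 2 * xbar + C + wbar / ⨅ i, v i with hE
  have hinc : ∀ s i, |X (s + 1) ω i - X s ω i| ≤ α s * (E * v i) := fun s i =>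
    step_increment hv hγ1 (hα s).1.le hFbd (hXb s) (hwb s) (hupd s ω) i
  have hE0 : 0 ≤ E := by
    have h1 := (abs_nonneg _).trans (hinc 0 ⟨0, hn⟩)
    exact nonneg_of_mul_nonneg_left (nonneg_of_mul_nonneg_right h1 (hα 0).1) (hv _)
  -- Displacement over part of the delay window, using `α_{k-τ+j} ≤ 2 α_k`.
  have hdisp : ∀ k, τ ≤ k → ∀ i, ∀ j : ℕ,
      |X (k - τ + j) ω i - X (k - τ) ω i| ≤ j * (2 * α k * (E * v i)) := by
    intro k hk i j
    have hvi := hv i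
    induction j with
    | zero => simp
    | succ j ih =>
      have hα2 : α (k - τ + j) ≤ 2 * α k := by
        have hkτ : (τ : ℝ) ≤ k := by exact_mod_cast hk
        have hj : (0 : ℝ) ≤ j := j.cast_nonneg
        rw [hstep, hstep, ← mul_div_assoc, Nat.cast_add, Nat.cast_sub hk,
          div_le_div_iff₀ (by linarith) (by linarith)]
        nlinarith
      calc |X (k - τ + (j + 1)) ω i - X (k - τ) ω i|
          ≤ |X (k - τ + j + 1) ω i - X (k - τ + j) ω i| + |X (k - τ + j) ω i - X (k - τ) ω i| :=
            abs_sub_le _ _ _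
        _ ≤ 2 * α k * (E * v i) + j * (2 * α k * (E * v i)) := by
            gcongr
            exact (hinc _ i).trans (by gcongr)
        _ = ((j + 1 : ℕ) : ℝ) * (2 * α k * (E * v i)) := by push_cast; ring
  have hdiff : ∀ k, τ ≤ k → ∀ i,
      |X k ω i - X (k - τ) ω i| ≤ 2 * τ * α k * E * v i := by
    intro k hk i
    have := hdisp k hk i τ
    rw [Nat.sub_add_cancel hk] at this
    exact this.trans_eq (by ring)
  have hphib : ∀ k, τ ≤ k → ∀ i, |phi k ω i| ≤ 4 * τ * E * v i * α k := by
    intro k hk i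
    have hvi := hv i
    have hn1 : vnorm v (X k ω - X (k - τ) ω) ≤ 2 * τ * α k * E :=
      vnorm_le hn hv fun i => hdiff k hk i
    have hn2 : vnorm v (F (X k ω) - F (X (k - τ) ω)) ≤ 2 * τ * α k * E := by
      have h1 := hcontr (X k ω) (X (k - τ) ω)
      have h2 := vnorm_nonneg hv (X k ω - X (k - τ) ω)
      nlinarith
    have hF : |F (X k ω) i - F (X (k - τ) ω) i| ≤ 2 * τ * α k * E * v i :=
      (abs_le_vnorm_mul hv (F (X k ω) - F (X (k - τ) ω)) i).trans (by gcongr)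
    have hone : |(if idx k ω = i then (1 : ℝ) else 0) - d k i ω| ≤ 1 := by
      have h0 := hd0 k i
      have h1 := hd1 k i
      rw [abs_le]
      split_ifs <;> constructor <;> linarith
    rw [hphi, abs_mul]
    calc _ ≤ 1 * |F (X k ω) i - F (X (k - τ) ω) i - (X k ω i - X (k - τ) ω i)| := by gcongr
      _ ≤ |F (X k ω) i - F (X (k - τ) ω) i| + |X k ω i - X (k - τ) ω i| := by
          rw [one_mul]; exact abs_sub _ _
      _ ≤ 2 * τ * α k * E * v i + 2 * τ * α k * E * v i := add_le_add hF (hdiff k hk i)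
      _ = _ := by ring
  refine vnorm_le hn hv fun i => ?_
  have hvi := hv i
  refine (weighted_sum_bound (d := fun ℓ => d ℓ i ω) (p := fun k => phi k ω i) hsg0 hh
    (by linarith) hstep (K := 4 * τ * E * v i) (by positivity) (fun s hs => hex i s hs)
    (fun s => hd1 s i) (fun s hs => hphib s hs i) t ht).trans_eq ?_
  ring
end

section
/- Let (ℱ_t)_{t≥0} be a filtration on a probability space, τ a positive integer, and (X_t)_{t≥0} a real-valued (ℱ_t)-adapted process satisfying E[X_t | ℱ_{t−τ}] = 0 for every t ≥ τ and E[X_t] = 0 for 0 ≤ t < τ, and |X_t| ≤ X̄_t almost surely for deterministic constants X̄_t. Then for every t ≥ 0 and every δ ∈ (0,1), with probability at least 1 − δ, |Σ_{k=0}^{t} X_k| ≤ √(2τ · (Σ_{k=0}^{t} X̄_k²) · log(2τ/δ)). -/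
/-!
Split `∑ X k` into the `τ` sums over the residue classes of `k` modulo `τ`. Within one class the
terms form a martingale difference sequence: the terms preceding `X n` in its class have index at
most `n - τ`, so their sum is `ℱ (n - τ)`-measurable and every exponential of it is orthogonal to
`X n`. Bounding `exp (s x)` by its chord on `[-b, b]` and using `cosh u ≤ exp (u ^ 2 / 2)`, each
class sum is sub-Gaussian with parameter the sum of its `Xbar k ^ 2`
(`hasSubgaussianMGF_residueSum`).

The `τ` class sums are dependent, so they are added with the general rule
`√c = √c₁ + √c₂` for sub-Gaussian parameters; by Cauchy–Schwarz the full sum is sub-Gaussian with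
parameter at most `τ * ∑ Xbar k ^ 2` (`hasSubgaussianMGF_sum`). The Chernoff bound at the stated
threshold gives failure probability at most `2 * (δ / (2 * τ)) = δ / τ ≤ δ`. This replaces the
union bound over the classes.

Conditional sub-Gaussianity in Mathlib requires a standard Borel space, hence the direct
moment-generating-function argument.
-/

open MeasureTheory Finset

namespace ShiftedAzuma

open ProbabilityTheory NNReal

/-- On `[-b, b]` the convex function `x ↦ exp (s * x)` lies below its chord. -/
lemma exp_mul_le_chord {x b : ℝ} (s : ℝ) (hx : |x| ≤ b) :
    Real.exp (s * x) ≤ Real.cosh (s * b) + Real.sinh (s * b) / b * x := by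
  obtain ⟨h1, h2⟩ := abs_le.1 hx
  rcases (abs_nonneg x |>.trans hx).eq_or_lt with hb | hb
  · have : x = 0 := by subst hb; linarith
    subst this
    simp [← hb]
  · have h := convexOn_exp.2 (Set.mem_univ (s * b)) (Set.mem_univ (-(s * b)))
      (show 0 ≤ (b + x) / (2 * b) from div_nonneg (by linarith) (by linarith))
      (show 0 ≤ (b - x) / (2 * b) from div_nonneg (by linarith) (by linarith))
      (by field_simp; ring)
    simp only [smul_eq_mul] at h
    have e1 : (b + x) / (2 * b) * (s * b) + (b - x) / (2 * b) * (-(s * b)) = s * x := by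
      field_simp; ring
    rw [e1] at h
    refine h.trans_eq ?_
    rw [Real.cosh_eq, Real.sinh_eq]
    field_simp
    ring

/-- One Azuma–Hoeffding step: adding a bounded increment orthogonal to every `exp (s * Y)`
increases the sub-Gaussian parameter by at most the square of the bound. -/
lemma add_of_orthogonal {Ω : Type*} {m0 : MeasurableSpace Ω} {μ : Measure Ω}
    [IsProbabilityMeasure μ] {X Y : Ω → ℝ} {c : ℝ≥0} {b : ℝ}
    (hY : HasSubgaussianMGF Y c μ) (hXm : AEStronglyMeasurable X μ)
    (hb : ∀ᵐ ω ∂μ, |X ω| ≤ b)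
    (horth : ∀ s, ∫ ω, Real.exp (s * Y ω) * X ω ∂μ = 0) :
    HasSubgaussianMGF (fun ω ↦ Y ω + X ω) (c + Real.nnabs b ^ 2) μ := by
  have hYX (s : ℝ) : Integrable (fun ω ↦ Real.exp (s * Y ω) * X ω) μ :=
    (hY.integrable_exp_mul s).mul_bdd (c := b) hXm hb
  have hle (s : ℝ) : ∀ᵐ ω ∂μ, Real.exp (s * (Y ω + X ω)) ≤
      Real.cosh (s * b) * Real.exp (s * Y ω)
        + Real.sinh (s * b) / b * (Real.exp (s * Y ω) * X ω) := by
    filter_upwards [hb] with ω h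
    rw [mul_add, Real.exp_add]
    have := mul_le_mul_of_nonneg_left (exp_mul_le_chord s h) (Real.exp_pos (s * Y ω)).le
    linarith
  have hint (s : ℝ) : Integrable (fun ω ↦ Real.cosh (s * b) * Real.exp (s * Y ω)
      + Real.sinh (s * b) / b * (Real.exp (s * Y ω) * X ω)) μ :=
    ((hY.integrable_exp_mul s).const_mul _).add ((hYX s).const_mul _)
  have hexp (s : ℝ) : Integrable (fun ω ↦ Real.exp (s * (Y ω + X ω))) μ := by
    refine (hint s).mono' ?_ ?_
    · exact Real.continuous_exp.comp_aestronglyMeasurable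
        ((hY.aestronglyMeasurable.add hXm).const_mul s)
    · filter_upwards [hle s] with ω h
      rwa [Real.norm_eq_abs, Real.abs_exp]
  refine ⟨hexp, fun s ↦ ?_⟩
  calc mgf (fun ω ↦ Y ω + X ω) μ s
      ≤ ∫ ω, (Real.cosh (s * b) * Real.exp (s * Y ω)
        + Real.sinh (s * b) / b * (Real.exp (s * Y ω) * X ω)) ∂μ :=
        integral_mono_ae (hexp s) (hint s) (hle s)
    _ = Real.cosh (s * b) * mgf Y μ s := by
        rw [integral_add ((hY.integrable_exp_mul s).const_mul _) ((hYX s).const_mul _),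
          integral_const_mul, integral_const_mul, horth s, mul_zero, add_zero, mgf]
    _ ≤ Real.exp ((s * b) ^ 2 / 2) * Real.exp (c * s ^ 2 / 2) :=
        mul_le_mul (Real.cosh_le_exp_half_sq _) (hY.mgf_le s) mgf_nonneg (Real.exp_pos _).le
    _ = Real.exp (((c + Real.nnabs b ^ 2 : ℝ≥0) : ℝ) * s ^ 2 / 2) := by
        rw [← Real.exp_add]
        congr 1
        push_cast
        rw [sq_abs]
        ring

/-- A variable with vanishing conditional expectation given `m` is orthogonal to
`m`-measurable functions. -/
lemma integral_mul_eq_zero_of_condExp {Ω : Type*} {m m0 : MeasurableSpace Ω} {μ : Measure Ω}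
    [IsProbabilityMeasure μ] (hm : m ≤ m0) {X Z : Ω → ℝ} (hZ : StronglyMeasurable[m] Z)
    (hX : Integrable X μ) (hZX : Integrable (fun ω ↦ Z ω * X ω) μ) (h : μ[X | m] =ᵐ[μ] 0) :
    ∫ ω, Z ω * X ω ∂μ = 0 := by
  have h1 : μ[fun ω ↦ Z ω * X ω | m] =ᵐ[μ] fun ω ↦ Z ω * (μ[X | m]) ω :=
    condExp_mul_of_stronglyMeasurable_left hZ hZX hX
  rw [← integral_condExp hm, integral_congr_ae h1]
  refine integral_eq_zero_of_ae ?_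
  filter_upwards [h] with ω hω
  simp [hω]

variable {Ω : Type*} {m0 : MeasurableSpace Ω} {μ : Measure Ω} [IsProbabilityMeasure μ]
  {ℱ : Filtration ℕ m0} {τ : ℕ} {X : ℕ → Ω → ℝ} {Xbar : ℕ → ℝ}

/-- The sum over the residue class of `r` modulo `τ` is sub-Gaussian with the Azuma–Hoeffding
parameter. -/
lemma hasSubgaussianMGF_residueSum (hadapted : Adapted ℱ X)
    (hshift : ∀ t, τ ≤ t → μ[X t | ℱ (t - τ)] =ᵐ[μ] 0)
    (hmean0 : ∀ t, t < τ → ∫ ω, X t ω ∂μ = 0)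
    (hbd : ∀ t, ∀ᵐ ω ∂μ, |X t ω| ≤ Xbar t) (r n : ℕ) :
    HasSubgaussianMGF (fun ω ↦ ∑ k ∈ range n with k % τ = r, X k ω)
      (∑ k ∈ range n with k % τ = r, Real.nnabs (Xbar k) ^ 2) μ := by
  have hmeas (k : ℕ) : AEStronglyMeasurable (X k) μ :=
    ((hadapted k).mono (ℱ.le k) le_rfl).aestronglyMeasurable
  induction n with
  | zero => simp
  | succ n ih =>
    by_cases hn : n % τ = r
    swap
    · simpa [range_add_one, filter_insert, hn] using ih
    have key : ∀ s, ∫ ω, Real.exp (s * ∑ k ∈ range n with k % τ = r, X k ω) * X n ω ∂μ = 0 := by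
      intro s
      rcases lt_or_ge n τ with hlt | hge
      · -- below `τ` the class of `n` has no earlier element
        have hempty : (range n).filter (fun k ↦ k % τ = r) = ∅ := by
          refine filter_eq_empty_iff.2 fun k hk hkr ↦ ?_
          have hk' := mem_range.1 hk
          rw [Nat.mod_eq_of_lt hlt] at hn
          rw [Nat.mod_eq_of_lt (hk'.trans hlt)] at hkr
          omega
        simp [hempty, hmean0 n hlt]
      · refine integral_mul_eq_zero_of_condExp (ℱ.le (n - τ)) ?_ ?_ ?_ (hshift n hge)
        · refine Measurable.stronglyMeasurable ?_
          refine Real.measurable_exp.comp (Measurable.const_mul ?_ s)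
          refine Finset.measurable_fun_sum _ fun k hk ↦ ?_
          obtain ⟨hk1, hk2⟩ := mem_filter.1 hk
          refine (hadapted k).mono (ℱ.mono ?_) le_rfl
          have hk3 := mem_range.1 hk1
          have hdvd : τ ∣ n - k :=
            (Nat.modEq_iff_dvd' hk3.le).1 (hk2.trans hn.symm)
          have := Nat.le_of_dvd (by omega) hdvd
          omega
        · exact Integrable.of_bound (hmeas n) (Xbar n) (hbd n)
        · exact (ih.integrable_exp_mul s).mul_bdd (c := Xbar n) (hmeas n) (hbd n)
    have h := add_of_orthogonal ih (hmeas n) (hbd n) key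
    simpa [range_add_one, filter_insert, hn, add_comm] using h

/-- Dependent sub-Gaussian variables: the square roots of the parameters add up. -/
lemma hasSubgaussianMGF_sum_of_dependent {S : ℕ → Ω → ℝ} {c : ℕ → ℝ≥0}
    (hS : ∀ r, HasSubgaussianMGF (S r) (c r) μ) (j : ℕ) :
    HasSubgaussianMGF (fun ω ↦ ∑ r ∈ range j, S r ω) ((∑ r ∈ range j, (c r).sqrt) ^ 2) μ := by
  induction j with
  | zero => simp
  | succ j ih =>
    have h := ih.add (hS j)
    simp only [sum_range_succ]
    convert h using 2
    simp

lemma hasSubgaussianMGF_sum (hτ : 0 < τ) (hadapted : Adapted ℱ X)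
    (hshift : ∀ t, τ ≤ t → μ[X t | ℱ (t - τ)] =ᵐ[μ] 0)
    (hmean0 : ∀ t, t < τ → ∫ ω, X t ω ∂μ = 0)
    (hbd : ∀ t, ∀ᵐ ω ∂μ, |X t ω| ≤ Xbar t) (n : ℕ) :
    HasSubgaussianMGF (fun ω ↦ ∑ k ∈ range n, X k ω)
      (τ * ∑ k ∈ range n, Real.nnabs (Xbar k) ^ 2) μ := by
  have h := hasSubgaussianMGF_sum_of_dependent
    (fun r ↦ hasSubgaussianMGF_residueSum hadapted hshift hmean0 hbd r n) τ
  have hmaps : ∀ k ∈ range n, k % τ ∈ range τ := fun k _ ↦ mem_range.2 (Nat.mod_lt k hτ)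
  simp only [sum_fiberwise_of_maps_to hmaps] at h
  refine ⟨h.integrable_exp_mul, fun s ↦ (h.mgf_le s).trans ?_⟩
  have hcs := sq_sum_le_card_mul_sum_sq (s := range τ)
    (f := fun r ↦ (∑ k ∈ range n with k % τ = r, Real.nnabs (Xbar k) ^ 2).sqrt)
  simp only [NNReal.sq_sqrt, card_range, sum_fiberwise_of_maps_to hmaps] at hcs
  have hcs' := NNReal.coe_le_coe.2 hcs
  gcongr

end ShiftedAzuma


/-- **Lemma 6 (Azuma–Hoeffding for a shifted martingale difference sequence).**
If `(X_t)` is `(ℱ_t)`-adapted with `E[X_t | ℱ_{t-τ}] = 0` for `t ≥ τ`, `E[X_t] = 0` for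
`0 ≤ t < τ`, and `|X_t| ≤ X̄_t` a.s., then for every `t` and `δ ∈ (0,1)`, with probability
at least `1-δ`, `|Σ_{k=0}^t X_k| ≤ √(2τ (Σ_{k=0}^t X̄_k²) log(2τ/δ))`. -/
theorem shifted_azuma_hoeffding
    {Ω : Type*} {m0 : MeasurableSpace Ω} (μ : Measure Ω) [IsProbabilityMeasure μ]
    (ℱ : Filtration ℕ m0) (τ : ℕ) (hτ : 0 < τ)
    (X : ℕ → Ω → ℝ) (hadapted : Adapted ℱ X)
    (hshift : ∀ t, τ ≤ t → μ[X t | ℱ (t - τ)] =ᵐ[μ] 0)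
    (hmean0 : ∀ t, t < τ → ∫ ω, X t ω ∂μ = 0)
    (Xbar : ℕ → ℝ) (hbd : ∀ t, ∀ᵐ ω ∂μ, |X t ω| ≤ Xbar t) :
    ∀ (t : ℕ) (δ : ℝ), 0 < δ → δ < 1 →
      ENNReal.ofReal (1 - δ) ≤
        μ {ω | |∑ k ∈ Finset.range (t + 1), X k ω| ≤
          Real.sqrt (2 * (τ : ℝ) * (∑ k ∈ Finset.range (t + 1), Xbar k ^ 2) *
            Real.log (2 * (τ : ℝ) / δ))} := by
  intro t δ hδ0 hδ1
  have hS := ShiftedAzuma.hasSubgaussianMGF_sum hτ hadapted hshift hmean0 hbd (t + 1)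
  set S : Ω → ℝ := fun ω ↦ ∑ k ∈ Finset.range (t + 1), X k ω with hSdef
  set V : ℝ := ∑ k ∈ Finset.range (t + 1), Xbar k ^ 2 with hV
  set c : NNReal := τ * ∑ k ∈ Finset.range (t + 1), Real.nnabs (Xbar k) ^ 2 with hc
  set ε : ℝ := Real.sqrt (2 * (τ : ℝ) * V * Real.log (2 * (τ : ℝ) / δ)) with hε
  have hcV : (c : ℝ) = τ * V := by simp [hc, hV]
  have hτ1 : (1 : ℝ) ≤ τ := by exact_mod_cast hτ
  have hV0 : 0 ≤ V := Finset.sum_nonneg fun k _ ↦ sq_nonneg _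
  change ENNReal.ofReal (1 - δ) ≤ μ {ω | |S ω| ≤ ε}
  rcases hV0.eq_or_lt with hVz | hVpos
  · -- the Chernoff exponent is the junk value `0 / 0` here, but the sum vanishes a.s.
    have hc0 : c = 0 := by
      rw [← NNReal.coe_eq_zero, hcV, ← hVz, mul_zero]
    rw [hc0] at hS
    have hone : μ {ω | |S ω| ≤ ε} = 1 := by
      have hae : ∀ᵐ ω ∂μ, ω ∈ {ω | |S ω| ≤ ε} := by
        filter_upwards [hS.ae_eq_zero_of_hasSubgaussianMGF_zero] with ω hω
        simp [hω, hε]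
      rw [measure_eq_measure_of_null_sdiff (Set.subset_univ _) (by
        rw [← Set.compl_eq_univ_sdiff]; exact hae), measure_univ]
    rw [hone]
    exact ENNReal.ofReal_le_one.2 (by linarith)
  have hlog : 0 ≤ Real.log (2 * (τ : ℝ) / δ) :=
    Real.log_nonneg ((one_le_div hδ0).2 (by linarith))
  have hεsq : ε ^ 2 = 2 * τ * V * Real.log (2 * τ / δ) := Real.sq_sqrt (by positivity)
  have hval : Real.exp (-ε ^ 2 / (2 * c)) = δ / (2 * τ) := by
    have : -ε ^ 2 / (2 * c) = -Real.log (2 * τ / δ) := by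
      rw [hεsq, hcV]
      field_simp
    rw [this, ← Real.log_inv, Real.exp_log (by positivity), inv_div]
  have h1 := hS.measure_ge_le (Real.sqrt_nonneg _ : 0 ≤ ε)
  have h2 := hS.neg.measure_ge_le (Real.sqrt_nonneg _ : 0 ≤ ε)
  rw [hval] at h1 h2
  have hbad : μ.real {ω | |S ω| ≤ ε}ᶜ ≤ δ := by
    calc μ.real {ω | |S ω| ≤ ε}ᶜ
        ≤ μ.real ({ω | ε ≤ S ω} ∪ {ω | ε ≤ (-S) ω}) := by
          refine measureReal_mono fun ω hω ↦ ?_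
          simp only [Set.mem_compl_iff, Set.mem_ofPred_eq, not_le] at hω
          rcases lt_abs.1 hω with h | h
          · exact Or.inl h.le
          · exact Or.inr h.le
      _ ≤ δ / (2 * τ) + δ / (2 * τ) :=
          (measureReal_union_le _ _).trans (add_le_add h1 h2)
      _ = δ / τ := by field_simp; norm_num
      _ ≤ δ := div_le_self hδ0.le hτ1
  have hSm : Measurable S :=
    Finset.measurable_fun_sum _ fun k _ ↦ (hadapted k).mono (ℱ.le k) le_rfl
  have hms : MeasurableSet {ω | |S ω| ≤ ε} := measurableSet_le hSm.abs measurable_const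
  rw [probReal_compl_eq_one_sub hms] at hbad
  rw [ENNReal.ofReal_le_iff_le_toReal (measure_ne_top _ _)]
  change 1 - δ ≤ μ.real _
  linarith
end

section
/- Let σ ∈ (0,1), v > 0, ε̄ > 0, and integers 0 ≤ τ ≤ t. Let (α_k), (d_k), (ε_k) be real sequences with α_k ∈ (0,1], d_k ∈ [σ, 1], and |ε_k| ≤ ε̄ v for all τ ≤ k ≤ t. Set β_{k,t} = α_k ∏_{ℓ=k+1}^{t}(1 − σ α_ℓ). Then |Σ_{k=τ}^{t} α_k ε_k ∏_{ℓ=k+1}^{t}(1 − α_ℓ d_ℓ)| ≤ max_{τ ≤ k0 ≤ t} ( |Σ_{k=k0+1}^{t} ε_k β_{k,t}| + 2 ε̄ v β_{k0,t} ). -/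
open Finset

/-!
Write `A_t = Σ_{k=τ}^t α_k ε_k ∏_{ℓ=k+1}^t (1 - α_ℓ d_ℓ)` and
`S_{j,t} = Σ_{k=j}^t α_k ε_k ∏_{ℓ=k+1}^t (1 - σ α_ℓ)`. Both satisfy first-order recursions in `t`,
`A_{t+1} = (1 - α d) A_t + α ε` and `S_{j,t+1} = (1 - σ α) S_{j,t} + α ε` (with `α, d, ε` at `t+1`),
and `S_{t+1,t+1} = α ε`. If `A_t ≤ S_{j,t}`, then `A_{t+1} ≤ (1 - α d) S_{j,t} + α ε`, which is at
most `S_{j,t+1}` when `S_{j,t} ≥ 0` and at most `S_{t+1,t+1}` otherwise. Hence `A_t ≤ S_{j,t}` for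
some `j ∈ [τ, t]` (`exists_le_tail_sum`). Applying this to `ε` and `-ε` gives `|A_t| ≤ |S_{j,t}|` for
some `j`, and splitting off the term `k = j` of `S_{j,t}` costs at most `ε̄ v β_{j,t}`, so the
conclusion holds even without the factor `2`.
-/

lemma sum_mul_prod_Icc_succ (f g : ℕ → ℝ) (a t : ℕ) (h : a ≤ t + 1) :
    ∑ k ∈ Finset.Icc a (t + 1), f k * ∏ ℓ ∈ Finset.Icc (k + 1) (t + 1), g ℓ =
      g (t + 1) * (∑ k ∈ Finset.Icc a t, f k * ∏ ℓ ∈ Finset.Icc (k + 1) t, g ℓ) + f (t + 1) := by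
  rw [Finset.sum_Icc_succ_top h, Finset.mul_sum]
  congr 1
  · refine Finset.sum_congr rfl fun k hk => ?_
    rw [Finset.prod_Icc_succ_top (by have := (Finset.mem_Icc.mp hk).2; omega)]
    ring
  · simp

/-- The sum weighted by the products of `1 - α_ℓ d_ℓ` is dominated by one of the tail sums weighted
by the products of `1 - σ α_ℓ`. -/
lemma exists_le_tail_sum (sg : ℝ) (τ t : ℕ) (hτt : τ ≤ t) (α d ε : ℕ → ℝ)
    (hα : ∀ k, τ ≤ k → k ≤ t → α k ∈ Set.Ioc (0 : ℝ) 1)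
    (hd : ∀ k, τ ≤ k → k ≤ t → d k ∈ Set.Icc sg 1) :
    ∃ j ∈ Finset.Icc τ t,
      ∑ k ∈ Finset.Icc τ t, α k * ε k * ∏ ℓ ∈ Finset.Icc (k + 1) t, (1 - α ℓ * d ℓ) ≤
        ∑ k ∈ Finset.Icc j t, α k * ε k * ∏ ℓ ∈ Finset.Icc (k + 1) t, (1 - sg * α ℓ) := by
  induction t, hτt using Nat.le_induction with
  | base => exact ⟨τ, by simp, by simp⟩
  | succ t ht ih =>
    obtain ⟨j, hj, hle⟩ := ih (fun k h1 h2 => hα k h1 (by omega)) (fun k h1 h2 => hd k h1 (by omega))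
    obtain ⟨hj1, hj2⟩ := Finset.mem_Icc.mp hj
    obtain ⟨ha0, ha1⟩ := hα (t + 1) (by omega) le_rfl
    obtain ⟨hd0, hd1⟩ := hd (t + 1) (by omega) le_rfl
    have hnn : 0 ≤ 1 - α (t + 1) * d (t + 1) := by nlinarith
    have hcmp : 1 - α (t + 1) * d (t + 1) ≤ 1 - sg * α (t + 1) := by nlinarith
    have hrec := sum_mul_prod_Icc_succ (fun k => α k * ε k) (fun ℓ => 1 - α ℓ * d ℓ) τ t (by omega)
    have hstep := mul_le_mul_of_nonneg_left hle hnn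
    rcases le_total 0 (∑ k ∈ Finset.Icc j t,
        α k * ε k * ∏ ℓ ∈ Finset.Icc (k + 1) t, (1 - sg * α ℓ)) with hS | hS
    · refine ⟨j, Finset.mem_Icc.mpr ⟨hj1, by omega⟩, ?_⟩
      have hrec' := sum_mul_prod_Icc_succ (fun k => α k * ε k) (fun ℓ => 1 - sg * α ℓ) j t (by omega)
      have := mul_le_mul_of_nonneg_right hcmp hS
      linarith
    · refine ⟨t + 1, Finset.mem_Icc.mpr ⟨by omega, le_rfl⟩, ?_⟩
      have := mul_nonpos_of_nonneg_of_nonpos hnn hS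
      rw [hrec]
      simp only [Finset.Icc_self, Finset.sum_singleton, Finset.Icc_eq_empty_of_lt (Nat.lt_succ_self _),
        Finset.prod_empty, mul_one]
      linarith

/-- **Lemma 7 (deterministic comparison lemma).** For sequences `α_k ∈ (0,1]`,
`d_k ∈ [σ,1]` and `|ε_k| ≤ ε̄v` on `τ ≤ k ≤ t`, with `β_{k,t} = α_k ∏_{ℓ=k+1}^t (1-σα_ℓ)`,
`|Σ_{k=τ}^t α_k ε_k ∏_{ℓ=k+1}^t (1-α_ℓ d_ℓ)| ≤
  max_{τ ≤ k₀ ≤ t} (|Σ_{k=k₀+1}^t ε_k β_{k,t}| + 2ε̄v β_{k₀,t})`. -/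
theorem weighted_noise_sum_comparison
    (sg v ebar : ℝ) (hsg0 : 0 < sg) (hsg1 : sg < 1) (hv : 0 < v) (hebar : 0 < ebar)
    (τ t : ℕ) (hτt : τ ≤ t)
    (α d ε : ℕ → ℝ)
    (hα : ∀ k, τ ≤ k → k ≤ t → α k ∈ Set.Ioc (0 : ℝ) 1)
    (hd : ∀ k, τ ≤ k → k ≤ t → d k ∈ Set.Icc sg 1)
    (hε : ∀ k, τ ≤ k → k ≤ t → |ε k| ≤ ebar * v) :
    |∑ k ∈ Finset.Icc τ t, α k * ε k * ∏ ℓ ∈ Finset.Icc (k + 1) t, (1 - α ℓ * d ℓ)| ≤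
      (Finset.Icc τ t).sup' (Finset.nonempty_Icc.mpr hτt) (fun k0 =>
        |∑ k ∈ Finset.Icc (k0 + 1) t,
            ε k * (α k * ∏ ℓ ∈ Finset.Icc (k + 1) t, (1 - sg * α ℓ))| +
          2 * ebar * v * (α k0 * ∏ ℓ ∈ Finset.Icc (k0 + 1) t, (1 - sg * α ℓ))) := by
  obtain ⟨j, hj, hjS⟩ : ∃ j ∈ Finset.Icc τ t,
      |∑ k ∈ Finset.Icc τ t, α k * ε k * ∏ ℓ ∈ Finset.Icc (k + 1) t, (1 - α ℓ * d ℓ)| ≤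
        |∑ k ∈ Finset.Icc j t, α k * ε k * ∏ ℓ ∈ Finset.Icc (k + 1) t, (1 - sg * α ℓ)| := by
    rcases abs_choice (∑ k ∈ Finset.Icc τ t,
        α k * ε k * ∏ ℓ ∈ Finset.Icc (k + 1) t, (1 - α ℓ * d ℓ)) with h | h
    · obtain ⟨j, hj, hle⟩ := exists_le_tail_sum sg τ t hτt α d ε hα hd
      exact ⟨j, hj, h.le.trans (hle.trans (le_abs_self _))⟩
    · obtain ⟨j, hj, hle⟩ := exists_le_tail_sum sg τ t hτt α d (fun k => -ε k) hα hd
      simp only [mul_neg, neg_mul, Finset.sum_neg_distrib] at hle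
      exact ⟨j, hj, h.le.trans (hle.trans (neg_le_abs _))⟩
  refine hjS.trans (le_trans ?_ (Finset.le_sup' _ hj))
  obtain ⟨hj1, hj2⟩ := Finset.mem_Icc.mp hj
  have hP : 0 ≤ ∏ ℓ ∈ Finset.Icc (j + 1) t, (1 - sg * α ℓ) := by
    refine Finset.prod_nonneg fun ℓ hℓ => ?_
    obtain ⟨h1, h2⟩ := Finset.mem_Icc.mp hℓ
    obtain ⟨ha0, ha1⟩ := hα ℓ (by omega) h2
    nlinarith
  have hβ : 0 ≤ α j * ∏ ℓ ∈ Finset.Icc (j + 1) t, (1 - sg * α ℓ) :=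
    mul_nonneg (hα j hj1 hj2).1.le hP
  have hsplit : ∑ k ∈ Finset.Icc j t, α k * ε k * ∏ ℓ ∈ Finset.Icc (k + 1) t, (1 - sg * α ℓ) =
      ∑ k ∈ Finset.Icc (j + 1) t, ε k * (α k * ∏ ℓ ∈ Finset.Icc (k + 1) t, (1 - sg * α ℓ)) +
        ε j * (α j * ∏ ℓ ∈ Finset.Icc (j + 1) t, (1 - sg * α ℓ)) := by
    rw [← Finset.insert_Icc_add_one_left_eq_Icc hj2, Finset.sum_insert (by simp), add_comm]
    congr 1
    · exact Finset.sum_congr rfl fun k _ => by ring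
    · ring
  rw [hsplit]
  refine (abs_add_le _ _).trans (add_le_add le_rfl ?_)
  rw [abs_mul, abs_of_nonneg hβ]
  refine mul_le_mul_of_nonneg_right ((hε j hj1 hj2).trans ?_) hβ
  nlinarith [mul_pos hebar hv]
end

section
/- Let γ ∈ (0,1), σ ∈ (0,1), h > 0 with σh(1−√γ) ≥ 1, t0 ≥ 1 with h/t0 ≤ 1/2, and α_k = h/(k + t0). Let (d_k) be any real sequence with d_k ∈ [σ, 1] for all k, and define b_{k,t} = α_k d_k ∏_{ℓ=k+1}^{t}(1 − α_ℓ d_ℓ). Then for every 0 < ω ≤ 1 and all integers 0 ≤ τ ≤ t: Σ_{k=τ}^{t} b_{k,t} · (k+t0)^{−ω} ≤ 1/(√γ · (t+1+t0)^ω). -/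
/-!
The weighted sum `S_t` satisfies the one-step recursion
`S_{t+1} = (1 - β) S_t + β x^{-ω}` with `x = t + 1 + t₀` and `β = α_{t+1} d_{t+1}`, so the bound
follows by induction on `t`, starting from the empty sum at `t = τ - 1`. If
`S_t ≤ x^{-ω} / √γ`, then `S_{t+1} ≤ (1 - β (1 - √γ)) x^{-ω} / √γ`. The condition
`σ h (1 - √γ) ≥ 1` gives `β (1 - √γ) ≥ 1 / x`, and
`1 - 1 / x ≤ x / (x + 1) ≤ (x / (x + 1)) ^ ω` (the last step uses `ω ≤ 1`) turns `x^{-ω}` into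
`(x + 1)^{-ω}`. The two lemmas below are this last inequality and the induction step.
-/

lemma one_sub_inv_mul_rpow_neg_le {x ω : ℝ} (hx : 0 < x) (hω1 : ω ≤ 1) :
    (1 - 1 / x) * x ^ (-ω) ≤ (x + 1) ^ (-ω) := by
  have hx1 : 0 < x + 1 := by linarith
  have h1 : 1 - 1 / x ≤ x / (x + 1) := by
    rw [← sub_nonneg]
    have : x / (x + 1) - (1 - 1 / x) = 1 / (x * (x + 1)) := by
      field_simp
      ring
    rw [this]
    positivity
  have h2 : x / (x + 1) ≤ (x / (x + 1)) ^ ω := by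
    have := Real.rpow_le_rpow_of_exponent_ge (x := x / (x + 1)) (by positivity)
      ((div_le_one hx1).2 (by linarith)) hω1
    simpa using this
  calc (1 - 1 / x) * x ^ (-ω) ≤ (x / (x + 1)) ^ ω * x ^ (-ω) :=
        mul_le_mul_of_nonneg_right (h1.trans h2) (by positivity)
    _ = (x + 1) ^ (-ω) := by
        rw [Real.div_rpow hx.le hx1.le, Real.rpow_neg hx.le, Real.rpow_neg hx1.le]
        have := (Real.rpow_pos_of_pos hx ω).ne'
        field_simp

/-- The induction step: `s` plays the role of `√γ` and `S` that of the previous partial sum. -/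
lemma weighted_step {x ω s β S : ℝ} (hx : 0 < x) (hω1 : ω ≤ 1)
    (hs : 0 < s) (hβ1 : β ≤ 1) (hβ : 1 / x ≤ β * (1 - s)) (hS : S ≤ 1 / (s * x ^ ω)) :
    (1 - β) * S + β * x ^ (-ω) ≤ 1 / (s * (x + 1) ^ ω) := by
  have hy : 0 < x ^ (-ω) := Real.rpow_pos_of_pos hx _
  have key := one_sub_inv_mul_rpow_neg_le hx hω1
  have e1 : 1 / (s * x ^ ω) = x ^ (-ω) / s := by
    rw [Real.rpow_neg hx.le]
    field_simp
  have e2 : 1 / (s * (x + 1) ^ ω) = (x + 1) ^ (-ω) / s := by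
    rw [Real.rpow_neg (by linarith)]
    field_simp
  rw [e1] at hS
  rw [e2]
  calc (1 - β) * S + β * x ^ (-ω) ≤ (1 - β) * (x ^ (-ω) / s) + β * x ^ (-ω) := by
        have := mul_le_mul_of_nonneg_left hS (sub_nonneg.2 hβ1)
        linarith
    _ = (1 - β * (1 - s)) * x ^ (-ω) / s := by
        field_simp
        ring
    _ ≤ (1 - 1 / x) * x ^ (-ω) / s := by gcongr
    _ ≤ (x + 1) ^ (-ω) / s := by gcongr

open Finset

/-- **Lemma 8.** For rescaled linear step sizes `α_k = h/(k+t₀)` with `σh(1-√γ) ≥ 1`,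
`t₀ ≥ 1`, `h/t₀ ≤ 1/2`, any sequence `d_k ∈ [σ,1]`, and
`b_{k,t} = α_k d_k ∏_{ℓ=k+1}^t (1-α_ℓ d_ℓ)`, one has, for every `0 < ω ≤ 1` and
`0 ≤ τ ≤ t`, `Σ_{k=τ}^t b_{k,t} (k+t₀)^{-ω} ≤ 1/(√γ (t+1+t₀)^ω)`. -/
theorem weighted_b_sum_bound
    (γ sg : ℝ) (hγ0 : 0 < γ) (hγ1 : γ < 1) (hsg0 : 0 < sg) (hsg1 : sg < 1)
    (h t0 : ℝ) (hh : 0 < h) (hcond : 1 ≤ sg * h * (1 - Real.sqrt γ))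
    (ht0 : 1 ≤ t0) (hα0 : h / t0 ≤ 1 / 2)
    (α : ℕ → ℝ) (hα : ∀ k, α k = h / ((k : ℝ) + t0))
    (d : ℕ → ℝ) (hd : ∀ k, d k ∈ Set.Icc sg 1) :
    ∀ (ω : ℝ), 0 < ω → ω ≤ 1 → ∀ τ t : ℕ, τ ≤ t →
      ∑ k ∈ Finset.Icc τ t,
          (α k * d k * ∏ ℓ ∈ Finset.Icc (k + 1) t, (1 - α ℓ * d ℓ)) *
            ((k : ℝ) + t0) ^ (-ω) ≤
        1 / (Real.sqrt γ * ((t : ℝ) + 1 + t0) ^ ω) := by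
  intro ω hω0 hω1 τ t hτt
  have hs : 0 < Real.sqrt γ := Real.sqrt_pos.2 hγ0
  have hs1 : Real.sqrt γ < 1 := by
    rw [Real.sqrt_lt' one_pos]
    simpa using hγ1
  have hx : ∀ k : ℕ, 0 < (k : ℝ) + t0 := fun k => by positivity
  have hβ1 : ∀ k, α k * d k ≤ 1 := by
    intro k
    have h1 : h / ((k : ℝ) + t0) ≤ h / t0 :=
      div_le_div_of_nonneg_left hh.le (by linarith) (by linarith [Nat.cast_nonneg (α := ℝ) k])
    have h0 : 0 < h / ((k : ℝ) + t0) := div_pos hh (hx k)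
    rw [hα]
    nlinarith [(hd k).2]
  have hβ : ∀ k : ℕ, 1 / ((k : ℝ) + t0) ≤ α k * d k * (1 - Real.sqrt γ) := by
    intro k
    have e : α k * d k * (1 - Real.sqrt γ) = d k * h * (1 - Real.sqrt γ) / ((k : ℝ) + t0) := by
      rw [hα]
      ring
    rw [e]
    refine div_le_div_of_nonneg_right (hcond.trans ?_) (hx k).le
    exact mul_le_mul_of_nonneg_right (mul_le_mul_of_nonneg_right (hd k).1 hh.le) (by linarith)
  induction t, hτt using Nat.le_induction with
  | base =>
    -- The case `t = τ` is the same step applied to the empty sum `S = 0`.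
    have := weighted_step (S := 0) (hx τ) hω1 hs (hβ1 τ) (hβ τ)
      (by have := hx τ; positivity)
    simp only [Finset.Icc_self, Finset.sum_singleton]
    rw [Finset.Icc_eq_empty (by omega), Finset.prod_empty, mul_one]
    rw [show (τ : ℝ) + 1 + t0 = τ + t0 + 1 by ring]
    linarith
  | succ t hτt ih =>
    have := weighted_step (hx (t + 1)) hω1 hs (hβ1 (t + 1)) (hβ (t + 1))
      (by simpa using ih)
    rw [show ((t + 1 : ℕ) : ℝ) + 1 + t0 = ((t + 1 : ℕ) : ℝ) + t0 + 1 by ring]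
    refine le_trans (le_of_eq ?_) this
    rw [Finset.sum_Icc_succ_top (by omega), Finset.mul_sum]
    congr 1
    · refine Finset.sum_congr rfl fun k hk => ?_
      have hk' := (Finset.mem_Icc.1 hk).2
      rw [Finset.prod_Icc_succ_top (by omega)]
      ring
    · rw [Finset.Icc_eq_empty (by omega), Finset.prod_empty, mul_one]
end
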